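/- Let x = (q, h_swr, ω, δ, h_ga) ∈ ℝ⁴ × ℝ^m × ℝ³ × ℝ^m × ℝ^m with q ≠ 0, and suppose J_st(δ) is invertible. Let h̄ := J_st(δ) ω + A_s(δ) h_swr + A_g h_ga, and let Z(x) be the 4 × (3m+7) matrix whose first row is [qᵀ/‖q‖, 0, 0, 0, 0] (blocks corresponding to q, h_swr, ω, δ, h_ga) and whose remaining three rows form the block matrix [2[h̄, −ĥ̄] O_L(q*), A_s(δ), J_st(δ), D(ω, δ, h_swr), A_g], where [h̄, −ĥ̄] is the 3×4 matrix with first column h̄ and remaining 3×3 block −ĥ̄. Then the four rows of Z(x) are linearly independent, i.e. Z(x) has rank 4. -/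

import Mathlib

open Matrix

noncomputable section

/-- The vector (imaginary) part of a quaternion, as a vector in `ℝ³`. -/
def qv (q : Quaternion ℝ) : Fin 3 → ℝ := ![q.imI, q.imJ, q.imK]

/-- The identification of a quaternion with the 4-vector `[q_s; q_v]`. -/
def qvec (q : Quaternion ℝ) : Fin 4 → ℝ := ![q.re, q.imI, q.imJ, q.imK]

/-- The hat operator: the skew-symmetric matrix of the cross product, `hat ω *ᵥ v = ω ×₃ v`. -/
def hat (ω : Fin 3 → ℝ) : Matrix (Fin 3) (Fin 3) ℝ :=
  !![0, -ω 2, ω 1; ω 2, 0, -ω 0; -ω 1, ω 0, 0]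

/-- The matrix of quaternion multiplication from the left:
`O_L(q) = [[q_s, −q_vᵀ], [q_v, q_s I₃ + q̂_v]]`. -/
def OL (q : Quaternion ℝ) : Matrix (Fin 4) (Fin 4) ℝ :=
  Matrix.reindex finSumFinEquiv finSumFinEquiv
    (Matrix.fromBlocks
      (Matrix.of fun _ _ => q.re)
      (Matrix.of fun _ j => -(qv q j))
      (Matrix.of fun i _ => qv q i)
      (q.re • (1 : Matrix (Fin 3) (Fin 3) ℝ) + hat (qv q)))

/-- The matrix of quaternion multiplication from the right:
`O_R(p) = [[p_s, −p_vᵀ], [p_v, p_s I₃ − p̂_v]]`. -/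
def OR (p : Quaternion ℝ) : Matrix (Fin 4) (Fin 4) ℝ :=
  Matrix.reindex finSumFinEquiv finSumFinEquiv
    (Matrix.fromBlocks
      (Matrix.of fun _ _ => p.re)
      (Matrix.of fun _ j => -(qv p j))
      (Matrix.of fun i _ => qv p i)
      (p.re • (1 : Matrix (Fin 3) (Fin 3) ℝ) - hat (qv p)))

variable {m : ℕ}

/-- Spin axes of a CMG array at gimbal angles `δ`:
`A_s(δ) = A_{s0} diag(cos δ) − A_{t0} diag(sin δ)`. -/
def Asf (As0 At0 : Matrix (Fin 3) (Fin m) ℝ) (δ : Fin m → ℝ) : Matrix (Fin 3) (Fin m) ℝ :=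
  As0 * Matrix.diagonal (fun i => Real.cos (δ i)) - At0 * Matrix.diagonal (fun i => Real.sin (δ i))

/-- Transverse axes of a CMG array at gimbal angles `δ`:
`A_t(δ) = A_{t0} diag(cos δ) + A_{s0} diag(sin δ)`. -/
def Atf (As0 At0 : Matrix (Fin 3) (Fin m) ℝ) (δ : Fin m → ℝ) : Matrix (Fin 3) (Fin m) ℝ :=
  At0 * Matrix.diagonal (fun i => Real.cos (δ i)) + As0 * Matrix.diagonal (fun i => Real.sin (δ i))

/-- The actuator Jacobian (relative wheel momenta form):
`D(ω, δ, h_swr) = [A_s diag(A_tᵀω) + A_t diag(A_sᵀω)](𝐉_t − 𝐉_s) − A_t diag(h_swr)`. -/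
def Dmat (As0 At0 : Matrix (Fin 3) (Fin m) ℝ) (Js Jt : Matrix (Fin m) (Fin m) ℝ)
    (ω : Fin 3 → ℝ) (δ hswr : Fin m → ℝ) : Matrix (Fin 3) (Fin m) ℝ :=
  (Asf As0 At0 δ * Matrix.diagonal ((Atf As0 At0 δ)ᵀ *ᵥ ω) +
      Atf As0 At0 δ * Matrix.diagonal ((Asf As0 At0 δ)ᵀ *ᵥ ω)) * (Jt - Js) -
    Atf As0 At0 δ * Matrix.diagonal hswr

/-- The actuator Jacobian (absolute wheel momenta form):
`D_a(ω, δ, h_swa) = [A_s diag(A_tᵀω) + A_t diag(A_sᵀω)](𝐉_t − 𝐉_sg) − A_t diag(h_swa)`. -/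
def Damat (As0 At0 : Matrix (Fin 3) (Fin m) ℝ) (Jsg Jt : Matrix (Fin m) (Fin m) ℝ)
    (ω : Fin 3 → ℝ) (δ hswa : Fin m → ℝ) : Matrix (Fin 3) (Fin m) ℝ :=
  (Asf As0 At0 δ * Matrix.diagonal ((Atf As0 At0 δ)ᵀ *ᵥ ω) +
      Atf As0 At0 δ * Matrix.diagonal ((Asf As0 At0 δ)ᵀ *ᵥ ω)) * (Jt - Jsg) -
    Atf As0 At0 δ * Matrix.diagonal hswa

/-- A variable total moment of inertia `J + A_s(δ) Js A_s(δ)ᵀ + A_t(δ) Jt A_t(δ)ᵀ`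
(this gives `J_st(δ)` for `Js = 𝐉_s` and `J_{st,a}(δ)` for `Js = 𝐉_sg`). -/
def Jstf (As0 At0 : Matrix (Fin 3) (Fin m) ℝ) (J : Matrix (Fin 3) (Fin 3) ℝ)
    (Js Jt : Matrix (Fin m) (Fin m) ℝ) (δ : Fin m → ℝ) : Matrix (Fin 3) (Fin 3) ℝ :=
  J + Asf As0 At0 δ * Js * (Asf As0 At0 δ)ᵀ + Atf As0 At0 δ * Jt * (Atf As0 At0 δ)ᵀ

/-- The 3×4 matrix `[h̄, −ĥ̄]` with first column `h̄` and remaining 3×3 block `−ĥ̄`. -/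
def Hmat (hb : Fin 3 → ℝ) : Matrix (Fin 3) (Fin 4) ℝ :=
  Matrix.of fun i => Fin.cons (hb i) (fun j => -(hat hb i j))

/-!
The first row of `Z(x)` vanishes outside the `q`-columns, so `Z(x)` is block lower triangular with
diagonal blocks `qᵀ/‖q‖` and `[A_s, J_st, D, A_g]`. The former is a single nonzero row, and the rows
of the latter are independent already on the columns of the invertible block `J_st`. A block lower
triangular matrix whose diagonal blocks have independent rows has independent rows itself.
-/

section BlockRows

variable {R ι κ α β : Type*}

lemma linearIndependent_row_fromCols_of_left [Semiring R] {A : Matrix ι α R}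
    (hA : LinearIndependent R A.row) (B : Matrix ι β R) :
    LinearIndependent R (fromCols A B).row :=
  .of_comp (LinearMap.funLeft R R Sum.inl) hA

lemma linearIndependent_row_fromCols_of_right [Semiring R] (A : Matrix ι α R) {B : Matrix ι β R}
    (hB : LinearIndependent R B.row) :
    LinearIndependent R (fromCols A B).row :=
  .of_comp (LinearMap.funLeft R R Sum.inr) hB

lemma linearIndependent_row_fromBlocks_zero₁₂ [Ring R] {A : Matrix ι α R} (C : Matrix κ α R)
    {D : Matrix κ β R} (hA : LinearIndependent R A.row) (hD : LinearIndependent R D.row) :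
    LinearIndependent R (fromBlocks A 0 C D).row := by
  let projRight : (α ⊕ β → R) →ₗ[R] β → R := LinearMap.funLeft R R Sum.inr
  have upper_le_ker :
      Submodule.span R (Set.range (fromCols A (0 : Matrix ι β R)).row) ≤ projRight.ker :=
    Submodule.span_le.mpr <| Set.range_subset_iff.mpr fun _ => rfl
  have lower_disjoint_ker :
      Disjoint (Submodule.span R (Set.range (fromCols C D).row)) projRight.ker :=
    Submodule.range_ker_disjoint hD
  rw [← fromRows_fromCols_eq_fromBlocks]
  exact linearIndependent_sum.mpr
    ⟨linearIndependent_row_fromCols_of_left hA 0, linearIndependent_row_fromCols_of_right C hD,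
      lower_disjoint_ker.symm.mono_left upper_le_ker⟩

lemma linearIndependent_row_replicateRow [Ring R] [IsDomain R] [Subsingleton ι]
    {v : α → R} (hv : v ≠ 0) :
    LinearIndependent R (replicateRow ι v).row :=
  (linearIndependent_subsingleton_index_iff _).mpr fun _ => hv

end BlockRows

lemma qvec_ne_zero {q : Quaternion ℝ} (hq : q ≠ 0) : qvec q ≠ 0 := by
  contrapose! hq
  ext
  exacts [congrFun hq 0, congrFun hq 1, congrFun hq 2, congrFun hq 3]

lemma norm_inv_smul_qvec_ne_zero {q : Quaternion ℝ} (hq : q ≠ 0) : ‖q‖⁻¹ • qvec q ≠ 0 :=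
  smul_ne_zero (inv_ne_zero (norm_ne_zero_iff.mpr hq)) (qvec_ne_zero hq)

/-- for a state `x = (q, h_swr, ω, δ, h_ga)` with `q ≠ 0` and `J_st(δ)`
invertible, the constraint Jacobian `Z(x)`, whose first row is `[qᵀ/‖q‖, 0, 0, 0, 0]`
and whose remaining three rows are `[2[h̄, −ĥ̄] O_L(q*), A_s(δ), J_st(δ), D(ω, δ, h_swr), A_g]`,
has linearly independent rows, i.e. rank 4. -/
theorem constraint_jacobian_full_rank
    {m : ℕ} (As0 At0 Ag : Matrix (Fin 3) (Fin m) ℝ)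
    (ds dt : Fin m → ℝ) (J : Matrix (Fin 3) (Fin 3) ℝ)
    (q : Quaternion ℝ) (hq : q ≠ 0)
    (hswr δ hga : Fin m → ℝ) (ω : Fin 3 → ℝ)
    (hJst : IsUnit (Jstf As0 At0 J (Matrix.diagonal ds) (Matrix.diagonal dt) δ))
    (hb : Fin 3 → ℝ)
    (hhb : hb = Jstf As0 At0 J (Matrix.diagonal ds) (Matrix.diagonal dt) δ *ᵥ ω +
      Asf As0 At0 δ *ᵥ hswr + Ag *ᵥ hga)
    (Z : Matrix (Fin 1 ⊕ Fin 3) (Fin 4 ⊕ (Fin m ⊕ (Fin 3 ⊕ (Fin m ⊕ Fin m)))) ℝ)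
    (hZ : Z = Matrix.of (Sum.elim
      -- first row: [qᵀ/‖q‖, 0, 0, 0, 0]
      (fun _ : Fin 1 => Sum.elim (fun j => qvec q j / ‖q‖) 0)
      -- remaining three rows: [2[h̄, −ĥ̄]O_L(q*), A_s(δ), J_st(δ), D(ω, δ, h_swr), A_g]
      (fun i : Fin 3 => Sum.elim
        (fun j => ((2 : ℝ) • (Hmat hb * OL (star q))) i j)
        (Sum.elim (fun j => Asf As0 At0 δ i j)
          (Sum.elim
            (fun j => Jstf As0 At0 J (Matrix.diagonal ds) (Matrix.diagonal dt) δ i j)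
            (Sum.elim
              (fun j => Dmat As0 At0 (Matrix.diagonal ds) (Matrix.diagonal dt) ω δ hswr i j)
              (fun j => Ag i j))))))) :
    LinearIndependent ℝ (fun i => Z i) ∧ Z.rank = 4 := by
  set Jst := Jstf As0 At0 J (diagonal ds) (diagonal dt) δ
  set D := Dmat As0 At0 (diagonal ds) (diagonal dt) ω δ hswr
  have Z_eq : Z = fromBlocks (replicateRow (Fin 1) (‖q‖⁻¹ • qvec q)) 0
      ((2 : ℝ) • (Hmat hb * OL (star q)))
      (fromCols (Asf As0 At0 δ) (fromCols Jst (fromCols D Ag))) := by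
    rw [hZ]
    ext (i | i) (j | j)
    · simp [div_eq_inv_mul]
    all_goals rfl
  have momentum_rows :
      LinearIndependent ℝ (fromCols (Asf As0 At0 δ) (fromCols Jst (fromCols D Ag))).row :=
    linearIndependent_row_fromCols_of_right _ <|
      linearIndependent_row_fromCols_of_left (linearIndependent_rows_iff_isUnit.mpr hJst) _
  have norm_row : LinearIndependent ℝ (replicateRow (Fin 1) (‖q‖⁻¹ • qvec q)).row :=
    linearIndependent_row_replicateRow (norm_inv_smul_qvec_ne_zero hq)
  have Z_rows : LinearIndependent ℝ Z.row :=
    Z_eq ▸ linearIndependent_row_fromBlocks_zero₁₂ _ norm_row momentum_rows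
  exact ⟨Z_rows, by simpa using Z_rows.rank_matrix⟩
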